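/- Let k ≥ 2, let B₁ = (b₁,…,b_k) be any digit block of length k with b₁ = b₂ = 1, and let B₂ = (0,…,0) be the all-zeros block of length k. Then there exists N₀ ∈ ℕ such that for all N ≥ N₀, occ(c, B₁, N) − occ(c, B₂, N) ≥ N/(10^{k+1}·log N). -/

import Mathlib

open scoped Classical

/-- The `i`-th decimal digit (for `i ≥ 1`) of a real number `α`, using the floor
convention, which for numbers admitting two decimal expansions selects the
expansion ending in a tail of `0`s. -/
noncomputable def digit (α : ℝ) (i : ℕ) : ℕ := (⌊α * 10 ^ i⌋ % 10).toNat

/-- Number of occurrences of the digit block `B` (of length `k`) as consecutive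
digits among the first `N` decimal digits of `α`:
`occ α B N = #{i : 1 ≤ i ≤ N - k + 1 ∧ (α_i, …, α_{i+k-1}) = B}`. -/
noncomputable def occ {k : ℕ} (α : ℝ) (B : Fin k → Fin 10) (N : ℕ) : ℕ :=
  ((Finset.Icc 1 N).filter fun i =>
    i + k ≤ N + 1 ∧ ∀ j : Fin k, digit α (i + (j : ℕ)) = (B j : ℕ)).card

/-- Discrepancy of the first `N` terms of a sequence `(x_n)_{n ≥ 1}` of points of `[0,1)`:
the supremum over `0 ≤ a < b < 1` of `|#{n ≤ N : x n ∈ [a,b)}/N - (b - a)|`. -/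
noncomputable def discSeq (x : ℕ → ℝ) (N : ℕ) : ℝ :=
  sSup {d : ℝ | ∃ a b : ℝ, 0 ≤ a ∧ a < b ∧ b < 1 ∧
    d = |(((Finset.Icc 1 N).filter fun n => x n ∈ Set.Ico a b).card : ℝ) / N - (b - a)|}

/-- Discrepancy of a real number for base 10: the discrepancy of the sequence
`(10^(n-1) α mod 1)_{n ≥ 1}`. -/
noncomputable def D (α : ℝ) (N : ℕ) : ℝ :=
  discSeq (fun n => Int.fract (10 ^ (n - 1) * α)) N

/-- `T v` is the total number of digits in the concatenation of the decimal
representations of `1, 2, …, v`. -/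
def T (v : ℕ) : ℕ := ∑ j ∈ Finset.Icc 1 v, (Nat.digits 10 j).length

/-- The Champernowne constant `c = 0.123456789101112…`, the concatenation of the
positive integers in base 10: the term `m` ends at decimal position `T m`. -/
noncomputable def champ : ℝ := ∑' m : ℕ, (m : ℝ) / 10 ^ T m

/-- `vOf N` is the least `v` with `T v ≥ N` (the term of the concatenation
containing the `N`-th digit). -/
noncomputable def vOf (N : ℕ) : ℕ := sInf {v | N ≤ T v}

/-- `nOf N` is the number of decimal digits of `vOf N`. -/
noncomputable def nOf (N : ℕ) : ℕ := (Nat.digits 10 (vOf N)).length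

/-- Number of non-overlapping occurrences of the block `B` (length `k`) in the string
`s_ℓ` (the concatenation of all `ℓ`-digit integers in increasing order): the number of
pairs `(y, j)` with `10^(ℓ-1) ≤ y < 10^ℓ`, `1 ≤ j ≤ ℓ - k + 1`, such that the digits of
`y` in positions `j, …, j + k - 1` (counted from the left) equal `B`. -/
def occNoSeg {k : ℕ} (B : Fin k → Fin 10) (ℓ : ℕ) : ℕ :=
  ((Finset.Ico (10 ^ (ℓ - 1)) (10 ^ ℓ) ×ˢ Finset.Icc 1 (ℓ - k + 1)).filter fun p =>
    ∀ i : Fin k, p.1 / 10 ^ (ℓ - (p.2 + (i : ℕ))) % 10 = (B i : ℕ)).card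

/-- Number of occurrences of the block `B` (length `k ≤ ℓ`) in the string `s_ℓ` that
straddle the boundary between two consecutive `ℓ`-digit terms `y` and `y + 1`:
the number of pairs `(y, j)` with `10^(ℓ-1) ≤ y < 10^ℓ - 1` and `1 ≤ j ≤ k - 1` such
that the last `j` digits of `y` are `(b₁, …, b_j)` and the first `k - j` digits of
`y + 1` are `(b_{j+1}, …, b_k)`. -/
def occOSeg {k : ℕ} (B : Fin k → Fin 10) (ℓ : ℕ) : ℕ :=
  ((Finset.Ico (10 ^ (ℓ - 1)) (10 ^ ℓ - 1) ×ˢ Finset.Ico 1 k).filter fun p =>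
    (∀ i : Fin k, (i : ℕ) < p.2 → p.1 / 10 ^ (p.2 - 1 - (i : ℕ)) % 10 = (B i : ℕ)) ∧
    (∀ i : Fin k, p.2 ≤ (i : ℕ) →
      (p.1 + 1) / 10 ^ (ℓ - 1 - ((i : ℕ) - p.2)) % 10 = (B i : ℕ))).card

/-! Let `Z` be the all-zeros block. Since a term of the concatenation never starts with `0`, every
occurrence of `Z` lies inside a single term. Replacing this occurrence by `B₁` and borrowing `1`
from the digits on its left gives a smaller term with `B₁` at the same place, and this map is
injective. Hence `B₁` has at least as many occurrences inside terms as `Z` has occurrences in all.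

Moreover `B₁` occurs across the boundary of two terms `y` and `y + 1` whenever `y` ends with `b₁`
and `y + 1` starts with `b₂ … b_k`. There are `10 ^ (l - k)` such pairs with `y + 1` of length `l`,
and this is at least `N / (10 ^ (k + 1) * log N)` when the `N`-th digit of `champ` belongs to a term
of length `l + 1`. -/

open Finset

/-! ### Decimal digits -/

lemma add_lt_length_digits_iff {b p n y : ℕ} (hb : 1 < b) :
    p + n < (Nat.digits b y).length ↔ b ^ n ≤ y / b ^ p := by
  rw [Nat.lt_digits_length_iff hb, Nat.le_div_iff_mul_le (by positivity), pow_add, mul_comm]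

lemma length_digits_eq_iff {b p n y : ℕ} (hb : 1 < b) :
    (Nat.digits b y).length = p + n + 1 ↔ b ^ n ≤ y / b ^ p ∧ y / b ^ p < b ^ (n + 1) := by
  rw [← not_le, ← add_lt_length_digits_iff hb, ← add_lt_length_digits_iff hb]
  omega

lemma leading_digit_ne_zero {b n y : ℕ} (hb : 1 < b) (h : (Nat.digits b y).length = n + 1) :
    y / b ^ n % b ≠ 0 := by
  have hlead : b ^ 0 ≤ y / b ^ n ∧ y / b ^ n < b ^ (0 + 1) := (length_digits_eq_iff hb).1 h
  rw [pow_zero, zero_add, pow_one] at hlead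
  rw [Nat.mod_eq_of_lt hlead.2]
  exact Nat.one_le_iff_ne_zero.1 hlead.1

lemma mod_pow_div_pow_mod {b i k : ℕ} (u : ℕ) (hi : i < k) :
    u % b ^ k / b ^ i % b = u / b ^ i % b := by
  rw [← pow_mul_pow_sub b hi.le, Nat.mod_mul_right_div_self,
    Nat.mod_mod_of_dvd _ (dvd_pow_self b (Nat.sub_ne_zero_of_lt hi))]

/-- The integer written in base `b` by the block `B`, with the most significant digit first. -/
def blockValue {b k : ℕ} (B : Fin k → Fin b) : ℕ :=
  finFunctionFinEquiv (B ∘ Fin.rev)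

lemma blockValue_lt {b k : ℕ} (B : Fin k → Fin b) : blockValue B < b ^ k :=
  Fin.isLt _

lemma div_pow_mod_pow_eq_blockValue_iff {b k p y : ℕ} [NeZero b] {B : Fin k → Fin b} :
    y / b ^ p % b ^ k = blockValue B ↔ ∀ j : Fin k, y / b ^ (p + j.rev) % b = B j := by
  have hlt : y / b ^ p % b ^ k < b ^ k := Nat.mod_lt _ (pow_pos (NeZero.pos b) k)
  calc y / b ^ p % b ^ k = blockValue B
      ↔ (⟨_, hlt⟩ : Fin (b ^ k)) = finFunctionFinEquiv (B ∘ Fin.rev) := by rw [Fin.ext_iff]; rfl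
    _ ↔ finFunctionFinEquiv.symm ⟨_, hlt⟩ = B ∘ Fin.rev := (Equiv.symm_apply_eq _).symm
    _ ↔ ∀ i : Fin k, y / b ^ p % b ^ k / b ^ (i : ℕ) % b = B i.rev := by
      simp only [funext_iff, Fin.ext_iff]; rfl
    _ ↔ ∀ j : Fin k, y / b ^ (p + j.rev) % b = B j := by
      rw [← Fin.revPerm.forall_congr_right]
      simp only [Fin.revPerm_apply, Fin.rev_rev, mod_pow_div_pow_mod _ (Fin.isLt _),
        Nat.div_div_eq_div_mul, pow_add]

lemma pow_le_blockValue {b n : ℕ} [NeZero b] {B : Fin (n + 1) → Fin b} (hB : B 0 ≠ 0) :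
    b ^ n ≤ blockValue B := by
  have hdigits := div_pow_mod_pow_eq_blockValue_iff (p := 0) (B := B).1
    (by rw [pow_zero, Nat.div_one, Nat.mod_eq_of_lt (blockValue_lt B)])
  have hlead : blockValue B / b ^ n % b = B 0 := by simpa using hdigits 0
  contrapose! hB
  rw [Nat.div_eq_of_lt hB, Nat.zero_mod] at hlead
  exact Fin.ext hlead.symm

lemma blockValue_zero (b k : ℕ) [NeZero b] : blockValue (fun _ : Fin k => (0 : Fin b)) = 0 := by
  simp [blockValue]

lemma digit_eq_of_floor_eq {α : ℝ} {i e m : ℕ} (h : ⌊α * 10 ^ (i + e)⌋ = m) :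
    digit α i = m / 10 ^ e % 10 := by
  have hfloor : ⌊α * 10 ^ i⌋ = ((m / 10 ^ e : ℕ) : ℤ) := by
    have hdiv := Int.floor_div_natCast (α * 10 ^ (i + e)) (10 ^ e)
    rw [h, Nat.cast_pow, Nat.cast_ofNat, pow_add, ← mul_assoc,
      mul_div_cancel_right₀ _ (by positivity)] at hdiv
    exact_mod_cast hdiv
  rw [digit, hfloor]
  omega

/-! ### The digits of the Champernowne constant -/

lemma T_succ (y : ℕ) : T (y + 1) = T y + (Nat.digits 10 (y + 1)).length :=
  Finset.sum_Icc_succ_top (by omega) _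

lemma T_strictMono : StrictMono T :=
  strictMono_nat_of_lt_succ fun y => by
    have : 0 < (Nat.digits 10 (y + 1)).length := by simp
    rw [T_succ]
    omega

lemma length_digits_le_T (y : ℕ) : (Nat.digits 10 y).length ≤ T y := by
  cases y with
  | zero => simp
  | succ y => rw [T_succ]; omega

/-- The integer whose decimal representation is the concatenation of those of `1, …, y`. -/
def champPrefix : ℕ → ℕ
  | 0 => 0
  | y + 1 => champPrefix y * 10 ^ (Nat.digits 10 (y + 1)).length + (y + 1)

lemma sum_range_eq_champPrefix_div (y : ℕ) :
    ∑ m ∈ range (y + 1), (m : ℝ) / 10 ^ T m = champPrefix y / 10 ^ T y := by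
  induction y with
  | zero => simp [champPrefix]
  | succ y ih =>
    rw [sum_range_succ, ih, T_succ, champPrefix, pow_add]
    push_cast
    field_simp

lemma champPrefix_succ_add_one_div (y : ℕ) :
    ((champPrefix (y + 1) : ℝ) + 1) / 10 ^ T (y + 1) = (champPrefix y + 1) / 10 ^ T y -
      (10 ^ (Nat.digits 10 (y + 1)).length - (y + 2)) / 10 ^ T (y + 1) := by
  rw [T_succ, champPrefix, pow_add]
  push_cast
  field_simp
  ring

lemma champPrefix_add_one_div_antitone :
    Antitone fun y => ((champPrefix y : ℝ) + 1) / 10 ^ T y := by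
  refine antitone_nat_of_succ_le fun y => ?_
  have h : ((y + 2 : ℕ) : ℝ) ≤ 10 ^ (Nat.digits 10 (y + 1)).length := by
    exact_mod_cast Nat.lt_base_pow_length_digits (m := y + 1) (by norm_num : 1 < 10)
  rw [champPrefix_succ_add_one_div]
  refine sub_le_self _ (div_nonneg (sub_nonneg.2 ?_) (by positivity))
  exact_mod_cast h

-- Consecutive values agree when `y + 1 = 9…9`; strictness comes from a multiple of `10`.
lemma exists_champPrefix_add_one_div_lt (y : ℕ) :
    ∃ z, ((champPrefix z : ℝ) + 1) / 10 ^ T z < (champPrefix y + 1) / 10 ^ T y := by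
  have h : 10 * y + 9 + 2 < 10 ^ (Nat.digits 10 (10 * y + 9 + 1)).length := by
    have hlt := Nat.lt_base_pow_length_digits (m := 10 * y + 9 + 1) (by norm_num : 1 < 10)
    obtain ⟨l, hl⟩ := Nat.exists_eq_succ_of_ne_zero
      (n := (Nat.digits 10 (10 * y + 9 + 1)).length) (by simp)
    rw [hl, pow_succ] at hlt ⊢
    omega
  have hpos : (0 : ℝ) < 10 ^ (Nat.digits 10 (10 * y + 9 + 1)).length - ((10 * y + 9 : ℕ) + 2) :=
    sub_pos.2 (by exact_mod_cast h)
  refine ⟨10 * y + 9 + 1, lt_of_lt_of_le ?_ (champPrefix_add_one_div_antitone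
    (show y ≤ 10 * y + 9 by omega))⟩
  rw [champPrefix_succ_add_one_div]
  exact sub_lt_self _ (by positivity)

lemma summable_champ : Summable fun m : ℕ => (m : ℝ) / 10 ^ T m := by
  refine summable_of_sum_range_le (c := 1) (fun m => by positivity) fun n => ?_
  calc ∑ m ∈ range n, (m : ℝ) / 10 ^ T m
      ≤ ∑ m ∈ range (n + 1), (m : ℝ) / 10 ^ T m :=
        sum_le_sum_of_subset_of_nonneg (range_mono n.le_succ) fun _ _ _ => by positivity
    _ = champPrefix n / 10 ^ T n := sum_range_eq_champPrefix_div n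
    _ ≤ (champPrefix n + 1) / 10 ^ T n := by gcongr; linarith
    _ ≤ (champPrefix 0 + 1) / 10 ^ T 0 := champPrefix_add_one_div_antitone n.zero_le
    _ = 1 := by simp [champPrefix, T]

lemma champPrefix_div_le_champ (y : ℕ) : (champPrefix y : ℝ) / 10 ^ T y ≤ champ := by
  rw [← sum_range_eq_champPrefix_div]
  exact summable_champ.sum_le_tsum _ fun _ _ => by positivity

lemma champ_le_champPrefix_add_one_div (y : ℕ) :
    champ ≤ ((champPrefix y : ℝ) + 1) / 10 ^ T y := by
  have hlim := (Filter.tendsto_add_atTop_iff_nat 1).2 summable_champ.hasSum.tendsto_sum_nat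
  refine le_of_tendsto hlim ?_
  filter_upwards [Filter.eventually_ge_atTop y] with m hm
  calc ∑ m ∈ range (m + 1), (m : ℝ) / 10 ^ T m
      = champPrefix m / 10 ^ T m := sum_range_eq_champPrefix_div m
    _ ≤ (champPrefix m + 1) / 10 ^ T m := by gcongr; linarith
    _ ≤ (champPrefix y + 1) / 10 ^ T y := champPrefix_add_one_div_antitone hm

lemma floor_champ_mul_pow_T (y : ℕ) : ⌊champ * 10 ^ T y⌋ = champPrefix y := by
  obtain ⟨z, hz⟩ := exists_champPrefix_add_one_div_lt y
  have hlo := champPrefix_div_le_champ y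
  have hhi := (champ_le_champPrefix_add_one_div z).trans_lt hz
  rw [div_le_iff₀ (by positivity)] at hlo
  rw [lt_div_iff₀ (by positivity)] at hhi
  rw [Int.floor_eq_iff, Int.cast_natCast]
  exact ⟨hlo, hhi⟩

lemma champPrefix_div_pow_mod {e y : ℕ} (he : e < (Nat.digits 10 y).length) :
    champPrefix y / 10 ^ e % 10 = y / 10 ^ e % 10 := by
  cases y with
  | zero => rfl
  | succ y =>
    have hmod : champPrefix (y + 1) ≡ y + 1 [MOD 10 ^ (Nat.digits 10 (y + 1)).length] := by
      simp [champPrefix, Nat.ModEq]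
    rw [← mod_pow_div_pow_mod _ he, hmod, mod_pow_div_pow_mod _ he]

lemma digit_champ {i e y : ℕ} (he : e < (Nat.digits 10 y).length) (hi : i + e = T y) :
    digit champ i = y / 10 ^ e % 10 := by
  rw [← champPrefix_div_pow_mod he]
  exact digit_eq_of_floor_eq (hi ▸ floor_champ_mul_pow_T y)

lemma digit_champ_T_add_one_ne_zero (y : ℕ) : digit champ (T y + 1) ≠ 0 := by
  obtain ⟨l, hl⟩ := Nat.exists_eq_succ_of_ne_zero (n := (Nat.digits 10 (y + 1)).length) (by simp)
  rw [digit_champ (e := l) (y := y + 1) (by omega) (by rw [T_succ]; omega)]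
  exact leading_digit_ne_zero (by norm_num) hl

lemma exists_mem_Ico_map_succ {f : ℕ → ℕ} (hf : StrictMono f) {x : ℕ} (hx : f 0 ≤ x) :
    ∃ n, f n ≤ x ∧ x < f (n + 1) := by
  have hcover := iUnion_Ico_map_succ_eq_Ici (fun n => hf.monotone n.zero_le)
    hf.not_bddAbove_range_of_isSuccArchimedean
  simpa using hcover.superset hx

lemma exists_place {i : ℕ} (hi : 0 < i) : ∃ y e, e < (Nat.digits 10 y).length ∧ i + e = T y := by
  obtain ⟨y, hlo, hhi⟩ := exists_mem_Ico_map_succ T_strictMono (x := i - 1) (by simp [T])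
  have hT := T_succ y
  exact ⟨y + 1, T (y + 1) - i, by omega, by omega⟩

lemma T_add_lt_T {x y e : ℕ} (h : x < y) (he : e < (Nat.digits 10 y).length) :
    T x + e < T y := by
  obtain ⟨z, rfl⟩ := Nat.exists_eq_add_one_of_ne_zero h.ne_bot
  have hxz : T x ≤ T z := T_strictMono.monotone (Nat.le_of_lt_succ h)
  rw [T_succ]
  omega

lemma place_unique {i x y d e : ℕ} (hd : d < (Nat.digits 10 x).length) (hx : i + d = T x)
    (he : e < (Nat.digits 10 y).length) (hy : i + e = T y) : x = y ∧ d = e := by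
  rcases lt_trichotomy x y with h | rfl | h
  · have := T_add_lt_T h he
    omega
  · exact ⟨rfl, by omega⟩
  · have := T_add_lt_T h hd
    omega

/-! ### Occurrences inside a term -/

/-- The block `B` occurs in the decimal expansion of `α` from position `i` on. -/
def OccursAt {k : ℕ} (α : ℝ) (B : Fin k → Fin 10) (i : ℕ) : Prop :=
  ∀ j : Fin k, digit α (i + j) = B j

/-- The starting positions of the occurrences counted by `occ`. -/
noncomputable def occurrences {k : ℕ} (α : ℝ) (B : Fin k → Fin 10) (N : ℕ) : Finset ℕ :=
  {i ∈ Icc 1 N | i + k ≤ N + 1 ∧ OccursAt α B i}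

lemma occ_eq_card_occurrences {k : ℕ} (α : ℝ) (B : Fin k → Fin 10) (N : ℕ) :
    occ α B N = #(occurrences α B N) := by
  unfold occ occurrences OccursAt
  congr

lemma mem_occurrences {n N i : ℕ} {α : ℝ} {B : Fin (n + 1) → Fin 10} :
    i ∈ occurrences α B N ↔ 0 < i ∧ i + n ≤ N ∧ OccursAt α B i := by
  rw [occurrences, mem_filter, mem_Icc, ← and_assoc, ← and_assoc]
  exact and_congr_left' (by omega)

lemma occursAt_champ_iff {k p y i : ℕ} {B : Fin k → Fin 10}
    (hp : p + k ≤ (Nat.digits 10 y).length) (hi : i + (p + k) = T y + 1) :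
    OccursAt champ B i ↔ y / 10 ^ p % 10 ^ k = blockValue B := by
  rw [div_pow_mod_pow_eq_blockValue_iff]
  refine forall_congr' fun j => ?_
  have hj : (j : ℕ) + j.rev + 1 = k := by rw [Fin.val_rev]; omega
  rw [digit_champ (e := p + j.rev) (y := y) (by omega) (by omega)]

/-- The occurrences of `B` inside the terms of the concatenation that end within the first `N`
digits: the pair `(y, p)` stands for the occurrence in the term `y` that has `p` digits of `y` on
its right. -/
def termOccurrences {k : ℕ} (B : Fin k → Fin 10) (N : ℕ) : Finset (ℕ × ℕ) :=
  {q ∈ range (N + 1) ×ˢ range (N + 1) | q.2 + k ≤ (Nat.digits 10 q.1).length ∧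
    T q.1 ≤ N + q.2 ∧ q.1 / 10 ^ q.2 % 10 ^ k = blockValue B}

lemma mem_termOccurrences {n N y p : ℕ} {B : Fin (n + 1) → Fin 10} :
    (y, p) ∈ termOccurrences B N ↔ p + (n + 1) ≤ (Nat.digits 10 y).length ∧
      T y ≤ N + p ∧ y / 10 ^ p % 10 ^ (n + 1) = blockValue B := by
  simp only [termOccurrences, mem_filter, mem_product, mem_range, and_iff_right_iff_imp]
  rintro ⟨hp, hT, -⟩
  have hlen : (Nat.digits 10 y).length ≤ y :=
    (Nat.digits_length_le_iff (by norm_num) y).2 (Nat.lt_pow_self (by norm_num))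
  have hpT : T (y - 1) + p < T y := T_add_lt_T (by omega) (by omega)
  have hy : y - 1 ≤ T (y - 1) := T_strictMono.le_apply
  omega

/-- The position in `champ` at which the occurrence `(y, p)` of a block of length `k` starts. -/
def termPosition (k : ℕ) (q : ℕ × ℕ) : ℕ :=
  T q.1 + 1 - (q.2 + k)

lemma termPosition_add {k p y : ℕ} (hp : p + k ≤ (Nat.digits 10 y).length) :
    termPosition k (y, p) + (p + k) = T y + 1 :=
  Nat.sub_add_cancel (hp.trans ((length_digits_le_T y).trans (Nat.le_succ _)))

lemma termPosition_mem_occurrences {n N : ℕ} {B : Fin (n + 1) → Fin 10} {q : ℕ × ℕ}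
    (hq : q ∈ termOccurrences B N) : termPosition (n + 1) q ∈ occurrences champ B N := by
  obtain ⟨y, p⟩ := q
  obtain ⟨hp, hT, hB⟩ := mem_termOccurrences.1 hq
  have hpos := termPosition_add hp
  have hlen := length_digits_le_T y
  exact mem_occurrences.2 ⟨by omega, by omega, (occursAt_champ_iff hp hpos).2 hB⟩

lemma termPosition_injOn {n N : ℕ} (B : Fin (n + 1) → Fin 10) :
    Set.InjOn (termPosition (n + 1)) (termOccurrences B N) := by
  rintro ⟨x, d⟩ hx ⟨y, e⟩ hy h
  have hd := (mem_termOccurrences.1 hx).1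
  have he := (mem_termOccurrences.1 hy).1
  have hposx := termPosition_add hd
  have hposy := termPosition_add he
  obtain ⟨rfl, hde⟩ : x = y ∧ d + n = e + n :=
    place_unique (i := termPosition (n + 1) (x, d)) (by omega) (by omega) (by omega) (by omega)
  rw [Nat.add_right_cancel hde]

lemma exists_term_of_occursAt_zero {k i : ℕ} (hi : 0 < i)
    (h : OccursAt champ (fun _ : Fin k => 0) i) :
    ∃ y p, p + k ≤ (Nat.digits 10 y).length ∧ i + (p + k) = T y + 1 := by
  obtain ⟨y, e, he, hy⟩ := exists_place hi
  have hk : k ≤ e + 1 := by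
    by_contra! hlt
    apply digit_champ_T_add_one_ne_zero y
    rw [← hy, add_assoc]
    exact h ⟨e + 1, hlt⟩
  exact ⟨y, e + 1 - k, by omega, by omega⟩

lemma occ_zero_le_card_termOccurrences (n N : ℕ) :
    occ champ (fun _ : Fin (n + 1) => (0 : Fin 10)) N ≤
      #(termOccurrences (fun _ : Fin (n + 1) => (0 : Fin 10)) N) := by
  rw [occ_eq_card_occurrences]
  refine card_le_card_of_surjOn (termPosition (n + 1)) fun i hi => ?_
  obtain ⟨hi0, hiN, hocc⟩ := mem_occurrences.1 hi
  obtain ⟨y, p, hp, hpos⟩ := exists_term_of_occursAt_zero hi0 hocc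
  refine ⟨(y, p), mem_termOccurrences.2 ⟨hp, by omega, (occursAt_champ_iff hp hpos).1 hocc⟩, ?_⟩
  have := termPosition_add hp
  omega

/-! ### From zeros to another block -/

lemma sub_sub_mod_of_dvd {m u v : ℕ} (hu : m ∣ u) (hu0 : u ≠ 0) (hv : v < m) :
    (u - (m - v)) % m = v := by
  obtain ⟨q, rfl⟩ := hu
  obtain ⟨q, rfl⟩ := Nat.exists_eq_succ_of_ne_zero (right_ne_zero_of_mul hu0)
  have hsub : m * (q + 1) - (m - v) = v + m * q := by
    rw [mul_add_one]
    omega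
  rw [hsub, Nat.add_mul_mod_self_left, Nat.mod_eq_of_lt hv]

/-- Replaces `k` zeros above the `p` last digits of `y` by the digits of `v`, borrowing `1` from the
digits on their left. -/
def borrow (k v : ℕ) (q : ℕ × ℕ) : ℕ × ℕ :=
  (q.1 - 10 ^ q.2 * (10 ^ k - v), q.2)

lemma dvd_and_ne_zero_of_mem_termOccurrences_zero {n N y p : ℕ}
    (h : (y, p) ∈ termOccurrences (fun _ : Fin (n + 1) => (0 : Fin 10)) N) :
    10 ^ (n + 1) ∣ y / 10 ^ p ∧ y / 10 ^ p ≠ 0 := by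
  obtain ⟨hp, -, h0⟩ := mem_termOccurrences.1 h
  have hlead : 10 ^ n ≤ y / 10 ^ p := (add_lt_length_digits_iff (by norm_num)).1 hp
  rw [blockValue_zero] at h0
  exact ⟨Nat.dvd_of_mod_eq_zero h0, (lt_of_lt_of_le (by positivity) hlead).ne'⟩

lemma borrow_mem_termOccurrences {n N : ℕ} {B : Fin (n + 1) → Fin 10} (hB : B 0 ≠ 0) {q : ℕ × ℕ}
    (hq : q ∈ termOccurrences (fun _ : Fin (n + 1) => (0 : Fin 10)) N) :
    borrow (n + 1) (blockValue B) q ∈ termOccurrences B N := by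
  obtain ⟨y, p⟩ := q
  obtain ⟨hdvd, hne⟩ := dvd_and_ne_zero_of_mem_termOccurrences_zero hq
  have hblock : (y - 10 ^ p * (10 ^ (n + 1) - blockValue B)) / 10 ^ p % 10 ^ (n + 1) =
      blockValue B := by
    rw [Nat.sub_mul_div, sub_sub_mod_of_dvd hdvd hne (blockValue_lt B)]
  refine mem_termOccurrences.2 ⟨(add_lt_length_digits_iff (by norm_num)).2 ?_, ?_, hblock⟩
  · exact (pow_le_blockValue hB).trans (hblock.ge.trans (Nat.mod_le _ _))
  · exact (T_strictMono.monotone (Nat.sub_le _ _)).trans (mem_termOccurrences.1 hq).2.1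

lemma borrow_injOn (n N v : ℕ) :
    Set.InjOn (borrow (n + 1) v) (termOccurrences (fun _ : Fin (n + 1) => (0 : Fin 10)) N) := by
  have hle : ∀ {y p}, (y, p) ∈ termOccurrences (fun _ : Fin (n + 1) => (0 : Fin 10)) N →
      10 ^ p * (10 ^ (n + 1) - v) ≤ y := fun {y p} h => by
    obtain ⟨hdvd, hne⟩ := dvd_and_ne_zero_of_mem_termOccurrences_zero h
    have hpow := Nat.le_of_dvd (Nat.pos_of_ne_zero hne) hdvd
    calc 10 ^ p * (10 ^ (n + 1) - v) ≤ 10 ^ p * (y / 10 ^ p) := by gcongr; omega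
      _ ≤ y := Nat.mul_div_le _ _
  rintro ⟨x, p⟩ hx ⟨y, p'⟩ hy h
  obtain ⟨hxy, rfl : p = p'⟩ := Prod.ext_iff.1 h
  rw [tsub_left_inj (hle hx) (hle hy) |>.1 hxy]

lemma card_termOccurrences_zero_le {n : ℕ} {B : Fin (n + 1) → Fin 10} (hB : B 0 ≠ 0) (N : ℕ) :
    #(termOccurrences (fun _ : Fin (n + 1) => (0 : Fin 10)) N) ≤ #(termOccurrences B N) :=
  card_le_card_of_injOn _ (fun _ => borrow_mem_termOccurrences hB) (borrow_injOn n N _)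

/-! ### Occurrences across a boundary -/

/-- The integers `y` ending with the first digit of `B` and such that `y + 1` consists of the
remaining digits of `B` followed by `m + 1` digits. -/
def straddlingTerms {n : ℕ} (B : Fin (n + 1) → Fin 10) (m : ℕ) : Finset ℕ :=
  {y ∈ range (10 ^ (n + m + 1)) | y % 10 = B 0 ∧
    (y + 1) / 10 ^ (m + 1) = blockValue (Fin.tail B)}

lemma mem_straddlingTerms {n m y : ℕ} {B : Fin (n + 1) → Fin 10} :
    y ∈ straddlingTerms B m ↔
      y % 10 = B 0 ∧ (y + 1) / 10 ^ (m + 1) = blockValue (Fin.tail B) := by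
  simp only [straddlingTerms, mem_filter, mem_range, and_iff_right_iff_imp]
  rintro ⟨-, hy⟩
  have hlt : y + 1 < 10 ^ n * 10 ^ (m + 1) :=
    (Nat.div_lt_iff_lt_mul (by positivity)).1 (hy.trans_lt (blockValue_lt _))
  rw [← pow_add] at hlt
  exact (Nat.lt_succ_self y).trans hlt

lemma pow_le_card_straddlingTerms {n : ℕ} {B : Fin (n + 1) → Fin 10}
    (hB : blockValue (Fin.tail B) ≠ 0) (m : ℕ) : 10 ^ m ≤ #(straddlingTerms B m) := by
  set c := blockValue (Fin.tail B) with hc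
  have hpow : 0 < 10 ^ m := by positivity
  have hpos : ∀ s ∈ Ico (c * 10 ^ m) ((c + 1) * 10 ^ m), 0 < s := fun s hs =>
    (mul_pos (Nat.pos_of_ne_zero hB) hpow).trans_le (mem_Ico.1 hs).1
  calc 10 ^ m = #(Ico (c * 10 ^ m) ((c + 1) * 10 ^ m)) := by
        rw [Nat.card_Ico, add_one_mul, Nat.add_sub_cancel_left]
    _ ≤ #(straddlingTerms B m) := by
        refine card_le_card_of_injOn (fun s => 10 * s + (B 0 + 1) % 10 - 1) (fun s hs => ?_)
          fun s hs t ht h => ?_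
        · have hs0 := hpos s hs
          have hdiv : s / 10 ^ m = c := Nat.div_eq_of_lt_le (mem_Ico.1 hs).1 (mem_Ico.1 hs).2
          refine mem_straddlingTerms.2 ⟨by dsimp only; omega, ?_⟩
          rw [pow_succ', ← Nat.div_div_eq_div_mul, ← hc, ← hdiv]
          congr 1
          dsimp only
          omega
        · have hs0 := hpos s hs
          have ht0 := hpos t ht
          dsimp only at h
          omega

lemma occursAt_champ_T {n m y : ℕ} {B : Fin (n + 1) → Fin 10} (hy0 : y ≠ 0)
    (hlen : (Nat.digits 10 (y + 1)).length = n + (m + 1)) (hy : y ∈ straddlingTerms B m) :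
    OccursAt champ B (T y) := by
  obtain ⟨hlast, hlead⟩ := mem_straddlingTerms.1 hy
  have hmod : (y + 1) / 10 ^ (m + 1) % 10 ^ n = blockValue (Fin.tail B) := by
    rw [hlead, Nat.mod_eq_of_lt (blockValue_lt _)]
  have htail := div_pow_mod_pow_eq_blockValue_iff.1 hmod
  refine Fin.cases ?_ fun j => ?_
  · have hlen0 := List.length_pos_iff.2 (Nat.digits_ne_nil_iff_ne_zero (b := 10) |>.2 hy0)
    rw [← hlast, Fin.val_zero, add_zero, digit_champ hlen0 (add_zero _), pow_zero, Nat.div_one]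
  · have hj : (j : ℕ) + j.rev + 1 = n := by rw [Fin.val_rev]; omega
    rw [digit_champ (e := m + 1 + j.rev) (y := y + 1) (by omega)
      (by rw [T_succ, Fin.val_succ]; omega)]
    exact htail j

section

variable {n m N : ℕ} {B : Fin (n + 2) → Fin 10} (hB : B 1 ≠ 0)
include hB

lemma length_digits_succ_of_mem_straddlingTerms {y : ℕ} (hy : y ∈ straddlingTerms B m) :
    (Nat.digits 10 (y + 1)).length = m + 1 + n + 1 := by
  rw [length_digits_eq_iff (by norm_num), (mem_straddlingTerms.1 hy).2]
  exact ⟨pow_le_blockValue hB, blockValue_lt _⟩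

lemma ne_zero_of_mem_straddlingTerms {y : ℕ} (hy : y ∈ straddlingTerms B m) : y ≠ 0 := by
  rintro rfl
  simpa using length_digits_succ_of_mem_straddlingTerms hB hy

lemma T_mem_occurrences {y : ℕ} (hN : T (10 ^ (n + 2 + m) - 1) ≤ N)
    (hy : y ∈ straddlingTerms B m) : T y ∈ occurrences champ B N := by
  have hlen := length_digits_succ_of_mem_straddlingTerms hB hy
  have hy0 := ne_zero_of_mem_straddlingTerms hB hy
  have hTy : y ≤ T y := T_strictMono.le_apply
  have hlt : y + 1 < 10 ^ (n + 2 + m) :=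
    (Nat.digits_length_le_iff (by norm_num) _).1 (by omega)
  have hle : T (y + 1) ≤ N := (T_strictMono.monotone (Nat.le_sub_one_of_lt hlt)).trans hN
  rw [T_succ] at hle
  exact mem_occurrences.2 ⟨by omega, by omega, occursAt_champ_T hy0 (by omega) hy⟩

lemma disjoint_image_termPosition_image_T :
    Disjoint ((termOccurrences B N).image (termPosition (n + 2)))
      ((straddlingTerms B m).image T) := by
  simp only [disjoint_left, mem_image]
  rintro i ⟨⟨x, p⟩, hx, hi⟩ ⟨y, hy, hiy⟩
  have hp := (mem_termOccurrences.1 hx).1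
  have hpos : termPosition (n + 2) (x, p) + (p + (n + 2)) = T x + 1 := termPosition_add hp
  have hy0 : 0 < (Nat.digits 10 y).length :=
    List.length_pos_iff.2 (Nat.digits_ne_nil_iff_ne_zero.2 (ne_zero_of_mem_straddlingTerms hB hy))
  have hplace : p + n + 1 = 0 :=
    (place_unique (i := i) (x := x) (y := y) (by omega) (by omega) hy0 (by omega)).2
  omega

lemma card_termOccurrences_add_card_straddlingTerms_le_occ (hN : T (10 ^ (n + 2 + m) - 1) ≤ N) :
    #(termOccurrences B N) + #(straddlingTerms B m) ≤ occ champ B N := by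
  rw [occ_eq_card_occurrences, ← card_image_of_injOn (termPosition_injOn B),
    ← card_image_of_injective (straddlingTerms B m) T_strictMono.injective,
    ← card_union_of_disjoint (disjoint_image_termPosition_image_T hB)]
  refine card_le_card (union_subset ?_ ?_)
  · exact image_subset_iff.2 fun _ => termPosition_mem_occurrences
  · exact image_subset_iff.2 fun _ => T_mem_occurrences hB hN

lemma occ_zero_add_pow_le_occ (hB0 : B 0 ≠ 0) (hN : T (10 ^ (n + 2 + m) - 1) ≤ N) :
    occ champ (fun _ : Fin (n + 2) => (0 : Fin 10)) N + 10 ^ m ≤ occ champ B N := by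
  have htail : blockValue (Fin.tail B) ≠ 0 :=
    ((pow_pos (by norm_num) n).trans_le (pow_le_blockValue hB)).ne'
  calc occ champ (fun _ : Fin (n + 2) => (0 : Fin 10)) N + 10 ^ m
      ≤ #(termOccurrences (fun _ : Fin (n + 2) => (0 : Fin 10)) N) + #(straddlingTerms B m) :=
        add_le_add (occ_zero_le_card_termOccurrences (n + 1) N)
          (pow_le_card_straddlingTerms htail m)
    _ ≤ #(termOccurrences B N) + #(straddlingTerms B m) :=
        Nat.add_le_add_right (card_termOccurrences_zero_le hB0 N) _
    _ ≤ occ champ B N := card_termOccurrences_add_card_straddlingTerms_le_occ hB hN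

end

/-! ### Growth of `T` -/

lemma T_ten_pow_sub_one_le (l : ℕ) : T (10 ^ l - 1) ≤ l * 10 ^ l := by
  have hlen : ∀ j ∈ Icc 1 (10 ^ l - 1), (Nat.digits 10 j).length ≤ l := fun j hj =>
    (Nat.digits_length_le_iff (by norm_num) j).2 (by have := mem_Icc.1 hj; omega)
  calc T (10 ^ l - 1) ≤ #(Icc 1 (10 ^ l - 1)) • l := sum_le_card_nsmul _ _ l hlen
    _ ≤ l * 10 ^ l := by
        rw [Nat.card_Icc, Nat.add_sub_cancel, smul_eq_mul, mul_comm]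
        exact Nat.mul_le_mul_left l (Nat.sub_le _ _)

lemma two_lt_log_ten : 2 < Real.log 10 := by
  rw [Real.lt_log_iff_exp_lt (by norm_num), ← one_add_one_eq_two, Real.exp_add]
  nlinarith [Real.exp_one_lt_d9, Real.exp_pos 1]

lemma add_one_le_log_of_T_le {l N : ℕ} (hl : 3 ≤ l) (hN : T (10 ^ l - 1) ≤ N) :
    (l : ℝ) + 1 ≤ Real.log N := by
  have hpow : 10 ^ (l - 1) ≤ N := by
    have hle : 10 ^ l - 1 ≤ T (10 ^ l - 1) := T_strictMono.le_apply
    have hlt : 10 ^ (l - 1) < 10 ^ l := Nat.pow_lt_pow_right (by norm_num) (by omega)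
    omega
  have hl' : (3 : ℝ) ≤ l := by exact_mod_cast hl
  calc (l : ℝ) + 1 ≤ (l - 1) * 2 := by linarith
    _ ≤ (l - 1) * Real.log 10 := by gcongr; exacts [by linarith, two_lt_log_ten.le]
    _ = Real.log (10 ^ (l - 1)) := by rw [Real.log_pow, Nat.cast_pred (by omega)]
    _ ≤ Real.log N := Real.log_le_log (by positivity) (by exact_mod_cast hpow)

lemma le_ten_pow_mul_log {l N : ℕ} (hl : 3 ≤ l) (hlo : T (10 ^ l - 1) ≤ N)
    (hhi : N < T (10 ^ (l + 1) - 1)) : (N : ℝ) ≤ 10 ^ (l + 1) * Real.log N := by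
  calc (N : ℝ) ≤ ((l + 1) * 10 ^ (l + 1) : ℕ) := by
        exact_mod_cast hhi.le.trans (T_ten_pow_sub_one_le (l + 1))
    _ = 10 ^ (l + 1) * (l + 1) := by push_cast; ring
    _ ≤ 10 ^ (l + 1) * Real.log N := by gcongr; exact add_one_le_log_of_T_le hl hlo

lemma T_ten_pow_sub_one_strictMono : StrictMono fun l => T (10 ^ l - 1) := fun i j hij => by
  have hi : 0 < 10 ^ i := by positivity
  have hlt : 10 ^ i < 10 ^ j := Nat.pow_lt_pow_right (by norm_num) hij
  exact T_strictMono (by omega)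

theorem occ_champ_witness_diff_general (k : ℕ) (hk : 2 ≤ k) (B₁ : Fin k → Fin 10)
    (h1 : B₁ ⟨0, Nat.zero_lt_of_lt hk⟩ ≠ 0) (h2 : B₁ ⟨1, hk⟩ ≠ 0) :
    ∃ N₀ : ℕ, ∀ N : ℕ, N₀ ≤ N →
      (occ champ B₁ N : ℝ) - (occ champ (fun _ : Fin k => (0 : Fin 10)) N : ℝ) ≥
        (N : ℝ) / (10 ^ (k + 1) * Real.log N) := by
  obtain ⟨n, rfl⟩ : ∃ n, k = n + 2 := ⟨k - 2, by omega⟩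
  refine ⟨T (10 ^ (n + 2 + 1) - 1), fun N hN => ?_⟩
  have hmono : StrictMono fun m => T (10 ^ (n + 2 + (m + 1)) - 1) := fun i j hij =>
    T_ten_pow_sub_one_strictMono (by omega)
  obtain ⟨m, hlo, hhi⟩ := exists_mem_Ico_map_succ hmono hN
  have hocc : (occ champ (fun _ : Fin (n + 2) => (0 : Fin 10)) N : ℝ) + 10 ^ (m + 1) ≤
      occ champ B₁ N := by
    exact_mod_cast occ_zero_add_pow_le_occ h2 h1 hlo
  have hlog : (0 : ℝ) < Real.log N :=
    (add_one_le_log_of_T_le (by omega) hlo).trans_lt' (by positivity)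
  have hdiv : (N : ℝ) / (10 ^ (n + 2 + 1) * Real.log N) ≤ 10 ^ (m + 1) := by
    rw [div_le_iff₀ (by positivity), ← mul_assoc, ← pow_add]
    exact (le_ten_pow_mul_log (by omega) hlo hhi).trans_eq (by ring)
  linarith

/-- For `k ≥ 2`, any block `B₁` of length `k` starting with two `1`s, and the
all-zeros block `B₂` of length `k`: there is `N₀` such that for all `N ≥ N₀`,
`occ(c, B₁, N) − occ(c, B₂, N) ≥ N / (10^{k+1}·log N)`. -/
theorem occ_champ_witness_diff (k : ℕ) (hk : 2 ≤ k) (B₁ : Fin k → Fin 10)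
    (h1 : (B₁ ⟨0, by omega⟩ : ℕ) = 1) (h2 : (B₁ ⟨1, by omega⟩ : ℕ) = 1) :
    ∃ N₀ : ℕ, ∀ N : ℕ, N₀ ≤ N →
      (occ champ B₁ N : ℝ) - (occ champ (fun _ : Fin k => (0 : Fin 10)) N : ℝ) ≥
        (N : ℝ) / (10 ^ (k + 1) * Real.log N) := by
  exact occ_champ_witness_diff_general k hk B₁ (fun h => by simp [h] at h1)
    (fun h => by simp [h] at h2)
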